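/- Let (a_n) and (c_n) be sequences of real numbers with c_n > a_n > 1 for all n, a_n → ∞, and c_n/a_n → ∞ as n → ∞. Set b_n = arcosh((cosh(a_n)·cosh(c_n) + 1)/(sinh(a_n)·sinh(c_n))). Then e^{a_n}·b_n → 2 as n → ∞. -/

import Mathlib

open Filter Topology

/-- The inverse hyperbolic cosine, for `x ≥ 1`. -/
noncomputable def arcosh (x : ℝ) : ℝ := Real.log (x + Real.sqrt (x ^ 2 - 1))

lemma coth_half_aux (x : ℝ) (hx : 0 < x) :
    (1 + Real.cosh x) / Real.sinh x = (1 + Real.exp (-x)) / (1 - Real.exp (-x)) := by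
  have h1 : Real.exp (-x) < 1 := by simpa using hx
  have hs : 0 < Real.sinh x := Real.sinh_pos_iff.mpr hx
  have he : Real.exp x * Real.exp (-x) = 1 := by rw [← Real.exp_add]; simp
  rw [div_eq_div_iff hs.ne' (by linarith), Real.cosh_eq, Real.sinh_eq]
  linear_combination (-1 : ℝ) * he

lemma arcosh_aux (a c : ℝ) (ha : 0 < a) (hc : 0 < c) :
    arcosh ((Real.cosh a * Real.cosh c + 1) / (Real.sinh a * Real.sinh c)) =
      (Real.log (1 + Real.exp (-a)) - Real.log (1 - Real.exp (-a))) +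
      (Real.log (1 + Real.exp (-c)) - Real.log (1 - Real.exp (-c))) := by
  have hsa : 0 < Real.sinh a := Real.sinh_pos_iff.mpr ha
  have hsc : 0 < Real.sinh c := Real.sinh_pos_iff.mpr hc
  have hca := Real.cosh_pos a
  have hcc := Real.cosh_pos c
  have h1 : Real.exp (-a) < 1 := by simpa using ha
  have h2 : Real.exp (-c) < 1 := by simpa using hc
  have p1 := Real.exp_pos (-a)
  have p2 := Real.exp_pos (-c)
  have key : ((Real.cosh a * Real.cosh c + 1) / (Real.sinh a * Real.sinh c)) ^ 2 - 1 =
      ((Real.cosh a + Real.cosh c) / (Real.sinh a * Real.sinh c)) ^ 2 := by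
    have e1 := Real.sinh_sq a
    have e2 := Real.sinh_sq c
    rw [div_pow, div_pow, mul_pow, e1, e2]
    have n1 : Real.cosh a ^ 2 - 1 ≠ 0 := by rw [← e1]; positivity
    have n2 : Real.cosh c ^ 2 - 1 ≠ 0 := by rw [← e2]; positivity
    field_simp
    ring
  have hsum : (Real.cosh a * Real.cosh c + 1) / (Real.sinh a * Real.sinh c) +
      (Real.cosh a + Real.cosh c) / (Real.sinh a * Real.sinh c) =
      ((1 + Real.cosh a) / Real.sinh a) * ((1 + Real.cosh c) / Real.sinh c) := by
    field_simp
    ring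
  have q1 : 0 < 1 - Real.exp (-a) := by linarith
  have q2 : 0 < 1 - Real.exp (-c) := by linarith
  rw [arcosh, key, Real.sqrt_sq (by positivity), hsum, coth_half_aux a ha, coth_half_aux c hc,
    Real.log_mul (by positivity) (by positivity), Real.log_div (by positivity) q1.ne',
    Real.log_div (by positivity) q2.ne']

lemma slope_aux : Tendsto (fun t : ℝ => t⁻¹ * (Real.log (1 + t) - Real.log (1 - t)))
    (𝓝[≠] 0) (𝓝 2) := by
  have hd : HasDerivAt (fun t : ℝ => Real.log (1 + t) - Real.log (1 - t)) 2 0 := by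
    have h1 : HasDerivAt (fun t : ℝ => Real.log (1 + t)) (1 / (1 + 0)) 0 :=
      ((hasDerivAt_id (0 : ℝ)).const_add 1).log (by norm_num)
    have h2 : HasDerivAt (fun t : ℝ => Real.log (1 - t)) (-1 / (1 - 0)) 0 :=
      ((hasDerivAt_id (0 : ℝ)).const_sub 1).log (by norm_num)
    have h3 := h1.sub h2
    have e : (1 / (1 + 0) - -1 / (1 - 0) : ℝ) = 2 := by norm_num
    rw [e] at h3
    exact h3
  simpa using hasDerivAt_iff_tendsto_slope_zero.mp hd

lemma slope_exp_aux (a : ℕ → ℝ) (ha : Tendsto a atTop atTop) :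
    Tendsto (fun n => Real.exp (a n) *
      (Real.log (1 + Real.exp (-a n)) - Real.log (1 - Real.exp (-a n)))) atTop (𝓝 2) := by
  have ht : Tendsto (fun n => Real.exp (-a n)) atTop (𝓝[≠] 0) :=
    tendsto_nhdsWithin_iff.mpr ⟨Real.tendsto_exp_neg_atTop_nhds_zero.comp ha,
      Eventually.of_forall fun n => (Real.exp_pos _).ne'⟩
  refine (slope_aux.comp ht).congr fun n => ?_
  simp [Function.comp, Real.exp_neg]

/-- The small-side lemma (Lemma 8.3): if `c_n > a_n > 1`, `a_n → ∞` and
`c_n / a_n → ∞`, then `b_n = 2 e^{-a_n} + o(e^{-a_n})`, i.e.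
`e^{a_n} b_n → 2`, where `cosh b_n = (cosh a_n cosh c_n + 1)/(sinh a_n sinh c_n)`. -/
theorem small_side_lemma (a c : ℕ → ℝ)
    (h : ∀ n, 1 < a n ∧ a n < c n)
    (ha : Tendsto a atTop atTop)
    (hca : Tendsto (fun n => c n / a n) atTop atTop) :
    Tendsto (fun n =>
        Real.exp (a n) *
          arcosh ((Real.cosh (a n) * Real.cosh (c n) + 1) /
            (Real.sinh (a n) * Real.sinh (c n))))
      atTop (𝓝 2) := by
  have hc : Tendsto c atTop atTop := tendsto_atTop_mono (fun n => (h n).2.le) ha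
  have hdiff : Tendsto (fun n => c n - a n) atTop atTop := by
    have h1 : Tendsto (fun n => a n * (c n / a n + (-1))) atTop atTop :=
      ha.atTop_mul_atTop₀ (tendsto_atTop_add_const_right _ _ hca)
    refine h1.congr fun n => ?_
    have : a n ≠ 0 := by linarith [(h n).1]
    field_simp
    ring
  have hr : Tendsto (fun n => Real.exp (-(c n - a n))) atTop (𝓝 0) :=
    Real.tendsto_exp_neg_atTop_nhds_zero.comp hdiff
  have hmain := (slope_exp_aux a ha).add (hr.mul (slope_exp_aux c hc))
  rw [zero_mul, add_zero] at hmain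
  refine hmain.congr fun n => ?_
  have h0 := h n
  rw [arcosh_aux (a n) (c n) (by linarith) (by linarith), mul_add, ← mul_assoc, ← Real.exp_add]
  congr 3
  ring_nf
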